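/- Let k, l : T → ℝ be continuous, with l_x (the partial derivative of l with respect to its first argument) also continuous on T. Then there exist constants c₁, c₂ > 0 such that for every continuously differentiable function ω : [0,1] → ℝ and every x ∈ [0,1], the function F[ω](x) = 𝒦[ 𝓛[ω] · (ω' + 𝓛₁[ω]) ](x) satisfies |F[ω](x)| ≤ c₁ (‖ω‖_{L²} + |ω(x)|)(‖ω'‖_{L²} + |ω'(x)|) + c₂ (‖ω‖²_{L²} + |ω(x)|²). -/

import Mathlib

open MeasureTheory

noncomputable section

/-- The closed triangle `T = {(x, y) : 0 ≤ x ≤ y ≤ 1}`. -/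
def T : Set (ℝ × ℝ) := {q : ℝ × ℝ | 0 ≤ q.1 ∧ q.1 ≤ q.2 ∧ q.2 ≤ 1}

/-- Partial derivative in the first variable. -/
def pdx (f : ℝ → ℝ → ℝ) (x y : ℝ) : ℝ := deriv (fun x' => f x' y) x

/-- The `L²(0,1)` norm. -/
def L2norm (f : ℝ → ℝ) : ℝ := (∫ x in (0:ℝ)..1, f x ^ 2) ^ (1/2 : ℝ)

/-- The functional `𝒦[v](x) = v(x) - ∫_x^1 k(x,y) v(y) dy`. -/
def opK (k : ℝ → ℝ → ℝ) (v : ℝ → ℝ) (x : ℝ) : ℝ := v x - ∫ y in x..1, k x y * v y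

/-- The functional `𝓛[v](x) = v(x) + ∫_x^1 l(x,y) v(y) dy`. -/
def opL (l : ℝ → ℝ → ℝ) (v : ℝ → ℝ) (x : ℝ) : ℝ := v x + ∫ y in x..1, l x y * v y

/-- The functional `𝓛₁[v](x) = l(x,x) v(x) + ∫_x^1 l_x(x,y) v(y) dy`. -/
def opL1 (l : ℝ → ℝ → ℝ) (v : ℝ → ℝ) (x : ℝ) : ℝ :=
  l x x * v x + ∫ y in x..1, pdx l x y * v y

/-- The functional `𝒫[v](x) = v(x) - ∫_x^1 p(x,y) v(y) dy`. -/
def opP (p : ℝ → ℝ → ℝ) (v : ℝ → ℝ) (x : ℝ) : ℝ := v x - ∫ y in x..1, p x y * v y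

/-- The functional `ℛ[v](x) = v(x) + ∫_x^1 r(x,y) v(y) dy`. -/
def opR (r : ℝ → ℝ → ℝ) (v : ℝ → ℝ) (x : ℝ) : ℝ := v x + ∫ y in x..1, r x y * v y

/-- The functional `𝒫₁[v](x) = p(x,x) v(x) - ∫_x^1 p_x(x,y) v(y) dy`. -/
def opP1 (p : ℝ → ℝ → ℝ) (v : ℝ → ℝ) (x : ℝ) : ℝ :=
  p x x * v x - ∫ y in x..1, pdx p x y * v y

lemma isCompact_T : IsCompact T := by
  have hclosed : IsClosed T :=
    (isClosed_le continuous_const continuous_fst).inter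
      ((isClosed_le continuous_fst continuous_snd).inter
        (isClosed_le continuous_snd continuous_const))
  refine (isCompact_Icc (a := ((0 : ℝ), (0 : ℝ))) (b := (1, 1))).of_isClosed_subset hclosed ?_
  rintro ⟨x, y⟩ ⟨h0, hxy, h1⟩
  exact ⟨⟨h0, h0.trans hxy⟩, ⟨hxy.trans h1, h1⟩⟩

lemma exists_abs_le_of_continuousOn_T {f : ℝ → ℝ → ℝ}
    (hf : ContinuousOn (Function.uncurry f) T) :
    ∃ C, ∀ x y, 0 ≤ x → x ≤ y → y ≤ 1 → |f x y| ≤ C := by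
  obtain ⟨C, hC⟩ := isCompact_T.exists_bound_of_continuousOn hf
  exact ⟨C, fun x y h0 hxy h1 => hC (x, y) ⟨h0, hxy, h1⟩⟩

lemma L2norm_nonneg (f : ℝ → ℝ) : 0 ≤ L2norm f :=
  Real.rpow_nonneg (intervalIntegral.integral_nonneg zero_le_one fun _ _ => sq_nonneg _) _

lemma L2norm_sq (f : ℝ → ℝ) : L2norm f ^ 2 = ∫ x in (0:ℝ)..1, f x ^ 2 := by
  have h : 0 ≤ ∫ x in (0:ℝ)..1, f x ^ 2 :=
    intervalIntegral.integral_nonneg zero_le_one fun _ _ => sq_nonneg _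
  rw [L2norm, ← Real.sqrt_eq_rpow, Real.sq_sqrt h]

/-- The Cauchy–Schwarz inequality on `[0, 1]`. -/
lemma integral_abs_mul_abs_le_L2norm {f g : ℝ → ℝ} (hf : Continuous f) (hg : Continuous g) :
    ∫ x in (0:ℝ)..1, |f x| * |g x| ≤ L2norm f * L2norm g := by
  have memLp_two : ∀ {h : ℝ → ℝ}, Continuous h →
      MemLp h (ENNReal.ofReal 2) (volume.restrict (Set.Ioc (0:ℝ) 1)) := by
    intro h hh
    obtain ⟨C, hC⟩ := (isCompact_Icc (a := (0:ℝ)) (b := 1)).exists_bound_of_continuousOn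
      hh.continuousOn
    refine MemLp.of_bound hh.aestronglyMeasurable C ?_
    filter_upwards [ae_restrict_mem measurableSet_Ioc] with x hx
    exact hC x (Set.Ioc_subset_Icc_self hx)
  have holder := integral_mul_norm_le_Lp_mul_Lq Real.HolderConjugate.two_two
    (memLp_two hf) (memLp_two hg)
  simpa [L2norm, intervalIntegral.integral_of_le] using holder

lemma integral_abs_le_L2norm {f : ℝ → ℝ} (hf : Continuous f) :
    ∫ x in (0:ℝ)..1, |f x| ≤ L2norm f := by
  simpa [L2norm] using integral_abs_mul_abs_le_L2norm hf (continuous_const (y := (1:ℝ)))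

/-- A continuous nonnegative majorant on `[x, 1]` bounds an integral by its integral over
`[0, 1]`. -/
lemma abs_integral_le_of_abs_le {f g : ℝ → ℝ} (hg : Continuous g) (hg0 : ∀ y, 0 ≤ g y)
    {x : ℝ} (hx : x ∈ Set.Icc (0:ℝ) 1) (hfg : ∀ y, x ≤ y → y ≤ 1 → |f y| ≤ g y) :
    |∫ y in x..1, f y| ≤ ∫ y in (0:ℝ)..1, g y := by
  rw [← Real.norm_eq_abs]
  exact (intervalIntegral.norm_integral_le_of_norm_le hx.2
    (Filter.Eventually.of_forall fun y hy => hfg y hy.1.le hy.2)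
    (hg.intervalIntegrable x 1)).trans
    (intervalIntegral.integral_mono_interval hx.1 hx.2 le_rfl
      (Filter.Eventually.of_forall hg0) (hg.intervalIntegrable 0 1))

lemma abs_integral_kernel_mul_le {m : ℝ → ℝ → ℝ} {M : ℝ} (hM : 0 ≤ M)
    (hm : ∀ x y, 0 ≤ x → x ≤ y → y ≤ 1 → |m x y| ≤ M) {v : ℝ → ℝ} (hv : Continuous v)
    {x : ℝ} (hx : x ∈ Set.Icc (0:ℝ) 1) :
    |∫ y in x..1, m x y * v y| ≤ M * L2norm v := by
  have h : |∫ y in x..1, m x y * v y| ≤ ∫ y in (0:ℝ)..1, M * |v y| := by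
    refine abs_integral_le_of_abs_le (by fun_prop) (fun y => by positivity) hx fun y hxy hy => ?_
    rw [abs_mul]
    exact mul_le_mul_of_nonneg_right (hm x y hx.1 hxy hy) (abs_nonneg _)
  rw [intervalIntegral.integral_const_mul] at h
  exact h.trans (mul_le_mul_of_nonneg_left (integral_abs_le_L2norm hv) hM)

/-- Pointwise bound on the product `𝓛[ω](ω' + 𝓛₁[ω])`. -/
lemma abs_opL_mul_le {l : ℝ → ℝ → ℝ} {M : ℝ} (hM : 0 ≤ M)
    (hl : ∀ x y, 0 ≤ x → x ≤ y → y ≤ 1 → |l x y| ≤ M)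
    (hlx : ∀ x y, 0 ≤ x → x ≤ y → y ≤ 1 → |pdx l x y| ≤ M)
    {ω : ℝ → ℝ} (hω : Continuous ω) {x : ℝ} (hx : x ∈ Set.Icc (0:ℝ) 1) :
    |opL l ω x * (deriv ω x + opL1 l ω x)| ≤
      (|ω x| + M * L2norm ω) * (|deriv ω x| + (M * |ω x| + M * L2norm ω)) := by
  rw [abs_mul]
  have hL : |opL l ω x| ≤ |ω x| + M * L2norm ω :=
    (abs_add_le _ _).trans (add_le_add_right (abs_integral_kernel_mul_le hM hl hω hx) _)
  have hdiag : |l x x * ω x| ≤ M * |ω x| := by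
    rw [abs_mul]
    exact mul_le_mul_of_nonneg_right (hl x x hx.1 le_rfl hx.2) (abs_nonneg _)
  have hL1 : |opL1 l ω x| ≤ M * |ω x| + M * L2norm ω :=
    (abs_add_le _ _).trans (add_le_add hdiag (abs_integral_kernel_mul_le hM hlx hω hx))
  exact mul_le_mul hL ((abs_add_le _ _).trans (add_le_add_right hL1 _)) (abs_nonneg _)
    ((abs_nonneg _).trans hL)

/-- The integral over `[0, 1]` of the pointwise bound in `abs_opL_mul_le`. -/
lemma integral_pointwise_bound_le {f g : ℝ → ℝ} (hf : Continuous f) (hg : Continuous g)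
    {M : ℝ} (hM : 1 ≤ M) :
    ∫ y in (0:ℝ)..1, (|f y| + M * L2norm f) * (|g y| + (M * |f y| + M * L2norm f)) ≤
      2 * M * (L2norm f * L2norm g) + 4 * M ^ 2 * L2norm f ^ 2 := by
  set A := L2norm f with hA
  set B := L2norm g with hB
  have hA0 : 0 ≤ A := L2norm_nonneg f
  have hB0 : 0 ≤ B := L2norm_nonneg g
  have expand : ∫ y in (0:ℝ)..1, (|f y| + M * A) * (|g y| + (M * |f y| + M * A)) =
      (∫ y in (0:ℝ)..1, |f y| * |g y|) + M * (∫ y in (0:ℝ)..1, f y ^ 2)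
        + (M * A + M ^ 2 * A) * (∫ y in (0:ℝ)..1, |f y|)
        + M * A * (∫ y in (0:ℝ)..1, |g y|) + M ^ 2 * A ^ 2 := by
    have integrand : ∀ y, (|f y| + M * A) * (|g y| + (M * |f y| + M * A)) =
        |f y| * |g y| + M * f y ^ 2 + (M * A + M ^ 2 * A) * |f y| + M * A * |g y|
          + M ^ 2 * A ^ 2 := by
      intro y
      rw [← sq_abs (f y)]
      ring
    have integrable : ∀ {h : ℝ → ℝ}, Continuous h → IntervalIntegrable h volume 0 1 :=
      fun hh => hh.intervalIntegrable 0 1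
    simp_rw [integrand]
    rw [intervalIntegral.integral_add (integrable (by fun_prop)) (integrable (by fun_prop)),
      intervalIntegral.integral_add (integrable (by fun_prop)) (integrable (by fun_prop)),
      intervalIntegral.integral_add (integrable (by fun_prop)) (integrable (by fun_prop)),
      intervalIntegral.integral_add (integrable (by fun_prop)) (integrable (by fun_prop))]
    simp
  rw [expand, ← L2norm_sq, ← hA]
  have hM0 : 0 ≤ M := zero_le_one.trans hM
  have hMM : M ≤ M ^ 2 := by nlinarith
  have hfg := integral_abs_mul_abs_le_L2norm hf hg
  have hf1 := mul_le_mul_of_nonneg_left (integral_abs_le_L2norm hf)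
    (by positivity : 0 ≤ M * A + M ^ 2 * A)
  have hg1 := mul_le_mul_of_nonneg_left (integral_abs_le_L2norm hg) (by positivity : 0 ≤ M * A)
  rw [← hA] at hfg hf1
  rw [← hB] at hfg hg1
  nlinarith [mul_le_mul_of_nonneg_right hM (mul_nonneg hA0 hB0),
    mul_le_mul_of_nonneg_right hMM (sq_nonneg A)]

/-- Bound on the nonlinear functional `F[ω] = 𝒦[𝓛[ω](ω' + 𝓛₁[ω])]`. -/
theorem F_functional_bound (k l : ℝ → ℝ → ℝ)
    (hk : ContinuousOn (Function.uncurry k) T)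
    (hl : ContinuousOn (Function.uncurry l) T)
    (hlx : ContinuousOn (Function.uncurry (pdx l)) T) :
    ∃ c₁ > (0:ℝ), ∃ c₂ > (0:ℝ),
      ∀ ω : ℝ → ℝ, ContDiff ℝ 1 ω → ∀ x ∈ Set.Icc (0:ℝ) 1,
        |opK k (fun x' => opL l ω x' * (deriv ω x' + opL1 l ω x')) x| ≤
          c₁ * (L2norm ω + |ω x|) * (L2norm (deriv ω) + |deriv ω x|)
          + c₂ * (L2norm ω ^ 2 + |ω x| ^ 2) := by
  obtain ⟨Ck, hCk⟩ := exists_abs_le_of_continuousOn_T hk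
  obtain ⟨Cl, hCl⟩ := exists_abs_le_of_continuousOn_T hl
  obtain ⟨Cx, hCx⟩ := exists_abs_le_of_continuousOn_T hlx
  obtain ⟨M, hM1, hkM, hlM, hxM⟩ : ∃ M : ℝ, 1 ≤ M ∧ Ck ≤ M ∧ Cl ≤ M ∧ Cx ≤ M :=
    ⟨max 1 (max Ck (max Cl Cx)), by simp⟩
  have hM0 : 0 < M := zero_lt_one.trans_le hM1
  refine ⟨3 * M ^ 2, by positivity, 6 * M ^ 3, by positivity, fun ω hω x hx => ?_⟩
  have hω0 : Continuous ω := hω.continuous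
  have hω1 : Continuous (deriv ω) := hω.continuous_deriv le_rfl
  have pointwise : ∀ y ∈ Set.Icc (0:ℝ) 1, |opL l ω y * (deriv ω y + opL1 l ω y)| ≤
      (|ω y| + M * L2norm ω) * (|deriv ω y| + (M * |ω y| + M * L2norm ω)) := fun y hy =>
    abs_opL_mul_le hM0.le (fun a b h0 h h1 => (hCl a b h0 h h1).trans hlM)
      (fun a b h0 h h1 => (hCx a b h0 h h1).trans hxM) hω0 hy
  have hA : 0 ≤ L2norm ω := L2norm_nonneg ω
  have hB : 0 ≤ L2norm (deriv ω) := L2norm_nonneg (deriv ω)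
  have integral_bound :
      |∫ y in x..1, k x y * (opL l ω y * (deriv ω y + opL1 l ω y))| ≤
        ∫ y in (0:ℝ)..1, M * ((|ω y| + M * L2norm ω) *
          (|deriv ω y| + (M * |ω y| + M * L2norm ω))) := by
    refine abs_integral_le_of_abs_le (by fun_prop) (fun y => by positivity) hx fun y hxy hy => ?_
    rw [abs_mul]
    exact mul_le_mul ((hCk x y hx.1 hxy hy).trans hkM) (pointwise y ⟨hx.1.trans hxy, hy⟩)
      (abs_nonneg _) hM0.le
  rw [intervalIntegral.integral_const_mul] at integral_bound
  replace integral_bound := integral_bound.trans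
    (mul_le_mul_of_nonneg_left (integral_pointwise_bound_le hω0 hω1 hM1) hM0.le)
  refine (abs_sub _ _).trans ((add_le_add (pointwise x hx) integral_bound).trans ?_)
  generalize L2norm ω = A at *
  generalize L2norm (deriv ω) = B at *
  have ha := abs_nonneg (ω x)
  have hb := abs_nonneg (deriv ω x)
  generalize |ω x| = a at *
  generalize |deriv ω x| = b at *
  have hMM : M ≤ M ^ 2 := by nlinarith
  have hMMM : M ^ 2 ≤ M ^ 3 := by nlinarith
  have weaken : a + M * A ≤ M * (A + a) := by nlinarith
  have cross : M * ((A + a) * b) ≤ M ^ 2 * ((A + a) * b) :=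
    mul_le_mul_of_nonneg_right hMM (by positivity)
  have square : M ^ 2 * (A + a) ^ 2 ≤ 2 * M ^ 3 * (A ^ 2 + a ^ 2) :=
    calc M ^ 2 * (A + a) ^ 2 ≤ M ^ 3 * (2 * (A ^ 2 + a ^ 2)) :=
          mul_le_mul hMMM (by nlinarith [sq_nonneg (A - a)]) (by positivity) (by positivity)
      _ = 2 * M ^ 3 * (A ^ 2 + a ^ 2) := by ring
  have first : (a + M * A) * (b + (M * a + M * A)) ≤ M * (A + a) * (b + M * (A + a)) :=
    mul_le_mul weaken (by linarith) (by positivity) (by positivity)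
  have slack : 0 ≤ M ^ 2 * (A * B + 2 * A * b + 3 * a * B + 2 * a * b) + 4 * M ^ 3 * a ^ 2 := by
    positivity
  nlinarith
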